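/- arXiv:2204.03451 — 7 statements merged into one kernel-verified Lean document; each statement's English description precedes it below -/
import Mathlib

section
/- For each fixed ρ with 0 < ρ < 1, the function ε ↦ ∫_{-1}^{-√(1-ρ²)} (1 + (ε-1)a²)^{-1/2} da tends to π/2 − arccos ρ as ε → 0⁺ (limit along the filter of positive reals approaching 0). -/
open Real MeasureTheory Filter

/-!
For `0 ≤ ε < 1` and `k = √(1 - ε)`, the substitution `y = k * x` turns the integrand into the
derivative of `arcsin`, so the integral over `[a, b] ⊆ [-1, 1]` equals
`k⁻¹ * (arcsin (k * b) - arcsin (k * a))`. This closed form is continuous at `ε = 0`, where `k = 1`.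
-/

theorem integral_one_sub_sq_rpow_neg_half {a b : ℝ} (ha : a ∈ Set.Icc (-1) 1)
    (hb : b ∈ Set.Icc (-1) 1) :
    ∫ x in a..b, (1 - x ^ 2) ^ (-(1 / 2) : ℝ) = arcsin b - arcsin a := by
  have hab : Set.uIcc a b ⊆ Set.Icc (-1) 1 := Set.uIcc_subset_Icc ha hb
  have hinterior : Set.uIoo a b ⊆ Set.Ioo (-1) 1 :=
    Set.Ioo_subset_Ioo (le_min ha.1 hb.1) (max_le ha.2 hb.2)
  have hint : IntervalIntegrable (fun x => √(1 - x ^ 2)⁻¹) volume a b :=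
    Polynomial.Chebyshev.intervalIntegrable_sqrt_one_sub_sq_inv.mono_set <| by
      rwa [Set.uIcc_of_le (by norm_num : (-1 : ℝ) ≤ 1)]
  calc ∫ x in a..b, (1 - x ^ 2) ^ (-(1 / 2) : ℝ)
      = ∫ x in a..b, √(1 - x ^ 2)⁻¹ := by
        refine intervalIntegral.integral_congr fun x hx => ?_
        have hnonneg : 0 ≤ 1 - x ^ 2 := by nlinarith [(hab hx).1, (hab hx).2]
        simp only [rpow_neg hnonneg, ← sqrt_eq_rpow, sqrt_inv]
    _ = arcsin b - arcsin a := by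
        refine intervalIntegral.integral_eq_sub_of_hasDeriv_right
          continuous_arcsin.continuousOn (fun x hx => ?_) hint
        simpa only [one_div, sqrt_inv] using
          (hasDerivAt_arcsin (hinterior hx).1.ne' (hinterior hx).2.ne).hasDerivWithinAt

theorem integral_one_sub_mul_sq_rpow_neg_half {a b k : ℝ} (hk : k ≠ 0)
    (ha : k * a ∈ Set.Icc (-1) 1) (hb : k * b ∈ Set.Icc (-1) 1) :
    ∫ x in a..b, (1 - (k * x) ^ 2) ^ (-(1 / 2) : ℝ) =
      k⁻¹ * (arcsin (k * b) - arcsin (k * a)) := by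
  rw [intervalIntegral.integral_comp_mul_left (fun x => (1 - x ^ 2) ^ (-(1 / 2) : ℝ)) hk,
    integral_one_sub_sq_rpow_neg_half ha hb, smul_eq_mul]

theorem integral_one_add_sub_one_mul_sq_rpow_neg_half {ε a b : ℝ} (hε : ε ∈ Set.Ico 0 1)
    (ha : a ∈ Set.Icc (-1) 1) (hb : b ∈ Set.Icc (-1) 1) :
    ∫ x in a..b, (1 + (ε - 1) * x ^ 2) ^ (-(1 / 2) : ℝ) =
      (√(1 - ε))⁻¹ * (arcsin (√(1 - ε) * b) - arcsin (√(1 - ε) * a)) := by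
  have hk_pos : 0 < √(1 - ε) := sqrt_pos.2 (sub_pos.2 hε.2)
  have hk_le : √(1 - ε) ≤ 1 := sqrt_le_one.2 (by linarith [hε.1])
  have hk_sq : √(1 - ε) ^ 2 = 1 - ε := sq_sqrt (sub_nonneg.2 hε.2.le)
  have hscale {x : ℝ} (hx : x ∈ Set.Icc (-1) 1) : √(1 - ε) * x ∈ Set.Icc (-1) 1 := by
    rw [Set.mem_Icc, ← abs_le] at hx ⊢
    rw [abs_mul, abs_of_pos hk_pos]
    exact mul_le_one₀ hk_le (abs_nonneg x) hx
  rw [← integral_one_sub_mul_sq_rpow_neg_half hk_pos.ne' (hscale ha) (hscale hb)]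
  congr! 3 with x
  rw [mul_pow, hk_sq]
  ring

theorem tendsto_integral_one_add_sub_one_mul_sq_rpow_neg_half {a b : ℝ}
    (ha : a ∈ Set.Icc (-1) 1) (hb : b ∈ Set.Icc (-1) 1) :
    Tendsto (fun ε : ℝ => ∫ x in a..b, (1 + (ε - 1) * x ^ 2) ^ (-(1 / 2) : ℝ))
      (nhdsWithin 0 (Set.Ici 0)) (nhds (arcsin b - arcsin a)) := by
  have hclosed : ∀ᶠ ε : ℝ in nhdsWithin 0 (Set.Ici 0),
      (√(1 - ε))⁻¹ * (arcsin (√(1 - ε) * b) - arcsin (√(1 - ε) * a)) =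
        ∫ x in a..b, (1 + (ε - 1) * x ^ 2) ^ (-(1 / 2) : ℝ) := by
    filter_upwards [Ico_mem_nhdsGE one_pos] with ε hε
    exact (integral_one_add_sub_one_mul_sq_rpow_neg_half hε ha hb).symm
  have hcont : ContinuousAt
      (fun ε : ℝ => (√(1 - ε))⁻¹ * (arcsin (√(1 - ε) * b) - arcsin (√(1 - ε) * a))) 0 := by
    fun_prop (disch := norm_num)
  refine Tendsto.congr' hclosed (Tendsto.mono_left ?_ nhdsWithin_le_nhds)
  simpa only [sub_zero, sqrt_one, inv_one, one_mul] using hcont.tendsto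

theorem stmt_2 (ρ : ℝ) (hρ0 : 0 < ρ) (hρ1 : ρ < 1) :
    Tendsto (fun ε : ℝ =>
        ∫ a in (-1 : ℝ)..(-Real.sqrt (1 - ρ ^ 2)), (1 + (ε - 1) * a ^ 2) ^ (-(1 / 2) : ℝ))
      (nhdsWithin 0 (Set.Ioi 0)) (nhds (π / 2 - Real.arccos ρ)) := by
  have hs_le : √(1 - ρ ^ 2) ≤ 1 := sqrt_le_one.2 (by linarith [sq_nonneg ρ])
  have hs_mem : -√(1 - ρ ^ 2) ∈ Set.Icc (-1) 1 :=
    ⟨neg_le_neg hs_le, by linarith [sqrt_nonneg (1 - ρ ^ 2)]⟩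
  have hvalue : arcsin (-√(1 - ρ ^ 2)) - arcsin (-1) = π / 2 - arccos ρ := by
    rw [arcsin_neg, ← arccos_eq_arcsin hρ0.le, arcsin_neg_one]
    ring
  rw [← hvalue]
  exact (tendsto_integral_one_add_sub_one_mul_sq_rpow_neg_half (by norm_num) hs_mem).mono_left
    (nhdsWithin_mono 0 Set.Ioi_subset_Ici_self)
end

section
/- For each fixed ρ with 0 < ρ < 1, the function ε ↦ √ε · ∫_{-1}^{-√(1-ρ²)} (1 + (ε-1)a²)^{-3/2} da tends to 1 as ε → 0⁺. -/
open Real MeasureTheory Filter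

/-!
The integrand has the elementary primitive `a / √(1 + (ε - 1) * a ^ 2)`. Its value at the endpoint
`-1` is exactly `-1 / √ε`, whereas at an endpoint `b` with `b ^ 2 < 1` it stays bounded as `ε → 0`.
After multiplication by `√ε` only the contribution of `-1` survives.
-/

theorem rpow_neg_three_halves {u : ℝ} (hu : 0 ≤ u) : u ^ (-(3 / 2) : ℝ) = (u * √u)⁻¹ := by
  rw [rpow_neg hu, sqrt_eq_rpow, ← rpow_one_add' hu (by norm_num)]
  norm_num

theorem hasDerivAt_div_sqrt_add_mul_sq {k c x : ℝ} (h : 0 < k + c * x ^ 2) :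
    HasDerivAt (fun x : ℝ => x / √(k + c * x ^ 2)) (k * (k + c * x ^ 2) ^ (-(3 / 2) : ℝ)) x := by
  have hquad : HasDerivAt (fun x : ℝ => k + c * x ^ 2) (c * (2 * x)) x := by
    simpa using ((hasDerivAt_pow 2 x).const_mul c).const_add k
  have hsqrt : √(k + c * x ^ 2) ≠ 0 := (sqrt_pos.2 h).ne'
  refine ((hasDerivAt_id x).div (hquad.sqrt h.ne') hsqrt).congr_deriv ?_
  rw [rpow_neg_three_halves h.le, id, sq_sqrt h.le]
  field_simp
  rw [sq_sqrt h.le]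
  ring

theorem mul_integral_add_mul_sq_rpow_neg_three_halves {k c a b : ℝ}
    (h : ∀ x ∈ Set.uIcc a b, 0 < k + c * x ^ 2) :
    k * ∫ x in a..b, (k + c * x ^ 2) ^ (-(3 / 2) : ℝ) =
      b / √(k + c * b ^ 2) - a / √(k + c * a ^ 2) := by
  have hcont : ContinuousOn (fun x : ℝ => (k + c * x ^ 2) ^ (-(3 / 2) : ℝ)) (Set.uIcc a b) :=
    ContinuousOn.rpow_const (by fun_prop) fun x hx => Or.inl (h x hx).ne'
  rw [← intervalIntegral.integral_const_mul]
  exact intervalIntegral.integral_eq_sub_of_hasDerivAt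
    (fun x hx => hasDerivAt_div_sqrt_add_mul_sq (h x hx))
    (hcont.intervalIntegrable.const_mul k)

theorem one_add_sub_one_mul_sq_pos {ε a : ℝ} (hε : 0 < ε) (ha : |a| ≤ 1) :
    0 < 1 + (ε - 1) * a ^ 2 := by
  have hsq : a ^ 2 ≤ 1 := (sq_le_one_iff_abs_le_one a).2 ha
  rcases (sq_nonneg a).eq_or_lt with hzero | hpos
  · simp [← hzero]
  · linarith [mul_pos hε hpos]

theorem sqrt_mul_integral_rpow_neg_three_halves {ε b : ℝ} (hε : 0 < ε) (hb : |b| ≤ 1) :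
    √ε * ∫ a in (-1 : ℝ)..b, (1 + (ε - 1) * a ^ 2) ^ (-(3 / 2) : ℝ) =
      1 + √ε * (b / √(1 + (ε - 1) * b ^ 2)) := by
  have hpos : ∀ a ∈ Set.uIcc (-1) b, 0 < 1 + (ε - 1) * a ^ 2 := by
    intro a ha
    rw [Set.uIcc_of_le (abs_le.1 hb).1] at ha
    exact one_add_sub_one_mul_sq_pos hε (abs_le.2 ⟨ha.1, ha.2.trans (abs_le.1 hb).2⟩)
  have hint := mul_integral_add_mul_sq_rpow_neg_three_halves hpos
  have hleft : 1 + (ε - 1) * (-1) ^ 2 = ε := by ring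
  have hsqrt : √ε ≠ 0 := (sqrt_pos.2 hε).ne'
  rw [one_mul, hleft] at hint
  rw [hint, mul_sub, mul_div_cancel₀ _ hsqrt]
  ring

theorem tendsto_sqrt_mul_div_sqrt {b : ℝ} (hb : |b| < 1) :
    Tendsto (fun ε : ℝ => √ε * (b / √(1 + (ε - 1) * b ^ 2))) (nhds 0) (nhds 0) := by
  have hlim : 0 < 1 + ((0 : ℝ) - 1) * b ^ 2 := by
    linarith [(sq_lt_one_iff_abs_lt_one b).2 hb]
  have hcont : ContinuousAt (fun ε : ℝ => √ε * (b / √(1 + (ε - 1) * b ^ 2))) 0 :=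
    continuous_sqrt.continuousAt.mul
      (ContinuousAt.div (by fun_prop) (by fun_prop) (sqrt_pos.2 hlim).ne')
  simpa only [sqrt_zero, zero_mul] using hcont.tendsto

theorem stmt_4_general {b : ℝ} (hb : |b| < 1) :
    Tendsto (fun ε : ℝ => √ε * ∫ a in (-1 : ℝ)..b, (1 + (ε - 1) * a ^ 2) ^ (-(3 / 2) : ℝ))
      (nhdsWithin 0 (Set.Ioi 0)) (nhds 1) := by
  have hlim : Tendsto (fun ε : ℝ => 1 + √ε * (b / √(1 + (ε - 1) * b ^ 2)))
      (nhdsWithin 0 (Set.Ioi 0)) (nhds 1) := by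
    simpa only [add_zero] using
      ((tendsto_sqrt_mul_div_sqrt hb).mono_left nhdsWithin_le_nhds).const_add 1
  refine hlim.congr' ?_
  filter_upwards [self_mem_nhdsWithin] with ε hε
  exact (sqrt_mul_integral_rpow_neg_three_halves hε hb.le).symm

theorem stmt_4 (ρ : ℝ) (hρ0 : 0 < ρ) (hρ1 : ρ < 1) :
    Tendsto (fun ε : ℝ =>
        Real.sqrt ε *
          ∫ a in (-1 : ℝ)..(-Real.sqrt (1 - ρ ^ 2)), (1 + (ε - 1) * a ^ 2) ^ (-(3 / 2) : ℝ))
      (nhdsWithin 0 (Set.Ioi 0)) (nhds 1) := by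
  apply stmt_4_general
  rw [abs_neg, abs_of_nonneg (sqrt_nonneg _), sqrt_lt' one_pos]
  linarith [pow_pos hρ0 2]
end

section
/- Let g : [-1,1] → ℝ be continuous. Then √ε · ∫_{-1}^{1} g(a)/√(1 + (ε-1)a²) da tends to 0 as ε → 0⁺. -/
open Real MeasureTheory Filter

/-!
Since `1 + (ε - 1) a² - ε = (1 - ε) (1 - a²)`, the weight `√ε / √(1 + (ε - 1) a²)` is at most `1` on
`[-1, 1]`. It tends to `0` as `ε → 0` at every `a` with `|a| < 1` (but not at `a = ±1`, where it
equals `1` for all `ε > 0`), so dominated convergence with dominating function `‖g‖` gives the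
limit.
-/

section DominatedConvergence

variable {ι α 𝕜 E : Type*} [MeasurableSpace α] [NormedRing 𝕜] [NormedAddCommGroup E]
  [NormedSpace ℝ E] [Module 𝕜 E] [IsBoundedSMul 𝕜 E] {μ : Measure α} {l : Filter ι}
  [l.IsCountablyGenerated] {w : ι → α → 𝕜} {g : α → E} {C : ℝ}

theorem tendsto_integral_smul_zero_of_norm_le (hg : Integrable g μ)
    (hw_meas : ∀ᶠ i in l, AEStronglyMeasurable (w i) μ)
    (hw_le : ∀ᶠ i in l, ∀ᵐ x ∂μ, ‖w i x‖ ≤ C)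
    (hw_lim : ∀ᵐ x ∂μ, Tendsto (w · x) l (nhds 0)) :
    Tendsto (fun i => ∫ x, w i x • g x ∂μ) l (nhds 0) := by
  rw [← integral_zero α E]
  refine tendsto_integral_filter_of_dominated_convergence (fun x => C * ‖g x‖) ?_ ?_
    (hg.norm.const_mul C) ?_
  · filter_upwards [hw_meas] with i hi using hi.smul hg.aestronglyMeasurable
  · filter_upwards [hw_le] with i hi
    filter_upwards [hi] with x hx
    exact (norm_smul_le _ _).trans (by gcongr)
  · filter_upwards [hw_lim] with x hx
    simpa only [zero_smul] using hx.smul_const (g x)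

end DominatedConvergence

section Weight

variable {ε a : ℝ}

theorem le_one_add_sub_one_mul_sq (hε : ε ≤ 1) (ha : |a| ≤ 1) : ε ≤ 1 + (ε - 1) * a ^ 2 := by
  have ha_sq : a ^ 2 ≤ 1 := (sq_le_one_iff_abs_le_one a).2 ha
  have h_prod : 0 ≤ (1 - ε) * (1 - a ^ 2) := mul_nonneg (sub_nonneg.2 hε) (sub_nonneg.2 ha_sq)
  linarith

theorem sqrt_div_sqrt_one_add_sub_one_mul_sq_le_one (hε : ε ≤ 1) (ha : |a| ≤ 1) :
    √ε / √(1 + (ε - 1) * a ^ 2) ≤ 1 :=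
  div_le_one_of_le₀ (sqrt_le_sqrt (le_one_add_sub_one_mul_sq hε ha)) (sqrt_nonneg _)

theorem tendsto_sqrt_div_sqrt_one_add_sub_one_mul_sq (ha : |a| < 1) :
    Tendsto (fun ε : ℝ => √ε / √(1 + (ε - 1) * a ^ 2)) (nhds 0) (nhds 0) := by
  have h_pos : 0 < 1 + ((0 : ℝ) - 1) * a ^ 2 := by linarith [(sq_lt_one_iff_abs_lt_one a).2 ha]
  have h_cont : ContinuousAt (fun ε : ℝ => √ε / √(1 + (ε - 1) * a ^ 2)) 0 :=
    ContinuousAt.div (by fun_prop) (by fun_prop) (sqrt_pos.2 h_pos).ne'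
  simpa only [sqrt_zero, zero_div] using h_cont.tendsto

end Weight

theorem stmt_6_general {E : Type*} [NormedAddCommGroup E] [NormedSpace ℝ E] [CompleteSpace E]
    {μ : Measure ℝ} [NullSingletonClass μ] {g : ℝ → E} (hg : IntervalIntegrable g μ (-1) 1) :
    Tendsto (fun ε : ℝ => √ε • ∫ a in (-1 : ℝ)..1, (√(1 + (ε - 1) * a ^ 2))⁻¹ • g a ∂μ)
      (nhdsWithin 0 (Set.Ioi 0)) (nhds 0) := by
  have h_le : (-1 : ℝ) ≤ 1 := by norm_num
  simp only [intervalIntegral.integral_of_le h_le, ← integral_smul, smul_smul, ← div_eq_mul_inv,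
    integral_Ioc_eq_integral_Ioo]
  refine tendsto_integral_smul_zero_of_norm_le (C := 1)
    ((intervalIntegrable_iff_integrableOn_Ioo_of_le h_le).1 hg)
    (.of_forall fun ε => Measurable.aestronglyMeasurable (by fun_prop)) ?_ ?_
  · filter_upwards [Ioo_mem_nhdsGT one_pos] with ε hε
    filter_upwards [ae_restrict_mem measurableSet_Ioo] with a ha
    rw [norm_of_nonneg (by positivity)]
    exact sqrt_div_sqrt_one_add_sub_one_mul_sq_le_one hε.2.le (abs_lt.2 ha).le
  · filter_upwards [ae_restrict_mem measurableSet_Ioo] with a ha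
    exact (tendsto_sqrt_div_sqrt_one_add_sub_one_mul_sq (abs_lt.2 ha)).mono_left nhdsWithin_le_nhds

theorem stmt_6 (g : ℝ → ℝ) (hg : ContinuousOn g (Set.Icc (-1) 1)) :
    Tendsto (fun ε : ℝ =>
        Real.sqrt ε * ∫ a in (-1 : ℝ)..1, g a / Real.sqrt (1 + (ε - 1) * a ^ 2))
      (nhdsWithin 0 (Set.Ioi 0)) (nhds 0) := by
  simpa only [smul_eq_mul, div_eq_inv_mul] using
    stmt_6_general (hg.intervalIntegrable_of_Icc (μ := volume) (by norm_num))
end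

section
/- Let c₁ < c₂ be real numbers, let f, ψ : [c₁,c₂] → ℝ be continuous, and suppose there is δ > 0 with |ψ(t)| ≥ δ for all t ∈ [c₁,c₂]. Then the function ε ↦ (1/√ε)·∫_{c₁}^{c₂} f(t)ψ(t)/(ε + (1-ε)ψ(t)²) dt − (1/√ε)·∫_{c₁}^{c₂} f(t)/ψ(t) dt is O(√ε) as ε → 0⁺. -/
open Real MeasureTheory Filter Asymptotics

/-!
Write `D = ε + (1 - ε) ψ²` and `w = ψ² / D`. Then `f ψ / D = w (f / ψ)`, and
`w - 1 = ε w (1 - ψ⁻²)`, so the two integrals differ by exactly `ε ∫ w (f / ψ - f / ψ³)`.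
As `0 ≤ w ≤ (1 - ε)⁻¹`, the last integral stays bounded as soon as `f / ψ` and `f / ψ³` are
integrable, and `ε / √ε = √ε`.
-/

/-- The ratio of the regularized inverse `r / (ε + (1 - ε) * r ^ 2)` to `r⁻¹`, used to compare the
two. -/
noncomputable def regularizationFactor (ε r : ℝ) : ℝ :=
  r ^ 2 / (ε + (1 - ε) * r ^ 2)

namespace regularizationFactor

variable {ε r : ℝ}

theorem mul_inv_eq_div (ε r : ℝ) :
    regularizationFactor ε r * r⁻¹ = r / (ε + (1 - ε) * r ^ 2) := by
  rw [regularizationFactor, div_mul_eq_mul_div, sq, mul_self_mul_inv]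

theorem sub_one_eq (hr : r ≠ 0) (hD : ε + (1 - ε) * r ^ 2 ≠ 0) :
    regularizationFactor ε r - 1 = ε * (regularizationFactor ε r * (1 - (r ^ 2)⁻¹)) := by
  have hmul : regularizationFactor ε r * (1 - (r ^ 2)⁻¹) =
      (r ^ 2 - 1) / (ε + (1 - ε) * r ^ 2) := by
    rw [regularizationFactor, div_mul_eq_mul_div, mul_sub, mul_one,
      mul_inv_cancel₀ (pow_ne_zero 2 hr)]
  rw [hmul, regularizationFactor, div_sub_one hD, mul_div_assoc']
  ring

theorem norm_le_inv_one_sub (hε₀ : 0 ≤ ε) (hε₁ : ε < 1) (r : ℝ) :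
    ‖regularizationFactor ε r‖ ≤ (1 - ε)⁻¹ := by
  have hε : 0 < 1 - ε := sub_pos.mpr hε₁
  have hD : 0 ≤ ε + (1 - ε) * r ^ 2 := by positivity
  rw [regularizationFactor, norm_of_nonneg (by positivity)]
  refine div_le_of_le_mul₀ hD (by positivity) ?_
  rw [mul_add, inv_mul_cancel_left₀ hε.ne']
  exact le_add_of_nonneg_left (by positivity)

theorem measurable (ε : ℝ) : Measurable (regularizationFactor ε) := by
  unfold regularizationFactor
  fun_prop

theorem div_smul_sub_inv_smul {E : Type*} [AddCommGroup E] [Module ℝ E]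
    (hr : r ≠ 0) (hD : ε + (1 - ε) * r ^ 2 ≠ 0) (v : E) :
    (r / (ε + (1 - ε) * r ^ 2)) • v - r⁻¹ • v =
      ε • regularizationFactor ε r • (r⁻¹ • v - (r ^ 3)⁻¹ • v) := by
  simp only [← mul_inv_eq_div, ← sub_smul, smul_smul]
  congr 1
  calc regularizationFactor ε r * r⁻¹ - r⁻¹
      = (regularizationFactor ε r - 1) * r⁻¹ := by ring
    _ = ε * (regularizationFactor ε r * (r⁻¹ - (r ^ 3)⁻¹)) := by
        rw [sub_one_eq hr hD]
        ring

end regularizationFactor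

section

variable {α E : Type*} [MeasurableSpace α] {μ : Measure α}
  [NormedAddCommGroup E] [NormedSpace ℝ E] {ψ : α → ℝ} {f g : α → E} {ε : ℝ}

theorem integrable_regularizationFactor_smul (hε₀ : 0 ≤ ε) (hε₁ : ε < 1)
    (hψ : AEMeasurable ψ μ) (hg : Integrable g μ) :
    Integrable (fun t => regularizationFactor ε (ψ t) • g t) μ :=
  hg.bdd_smul (1 - ε)⁻¹
    ((regularizationFactor.measurable ε).comp_aemeasurable hψ).aestronglyMeasurable
    (.of_forall fun t => regularizationFactor.norm_le_inv_one_sub hε₀ hε₁ (ψ t))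

theorem integral_div_smul_sub_integral_inv_smul (hε₀ : 0 ≤ ε) (hε₁ : ε < 1)
    (hψ : AEMeasurable ψ μ) (hψ₀ : ∀ᵐ t ∂μ, ψ t ≠ 0)
    (hf : Integrable (fun t => (ψ t)⁻¹ • f t) μ) :
    (∫ t, (ψ t / (ε + (1 - ε) * ψ t ^ 2)) • f t ∂μ) - ∫ t, (ψ t)⁻¹ • f t ∂μ =
      ε • ∫ t, regularizationFactor ε (ψ t) • ((ψ t)⁻¹ • f t - (ψ t ^ 3)⁻¹ • f t) ∂μ := by
  have hreg : Integrable (fun t => (ψ t / (ε + (1 - ε) * ψ t ^ 2)) • f t) μ := by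
    simpa only [smul_smul, regularizationFactor.mul_inv_eq_div] using
      integrable_regularizationFactor_smul hε₀ hε₁ hψ hf
  rw [← integral_sub hreg hf, ← integral_smul]
  refine integral_congr_ae ?_
  filter_upwards [hψ₀] with t ht
  have hD : 0 < ε + (1 - ε) * ψ t ^ 2 :=
    add_pos_of_nonneg_of_pos hε₀ (mul_pos (sub_pos.mpr hε₁) (sq_pos_of_ne_zero ht))
  exact regularizationFactor.div_smul_sub_inv_smul ht hD.ne' (f t)

theorem isBigO_one_integral_regularizationFactor_smul (ψ : α → ℝ) (hg : Integrable g μ) :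
    (fun ε : ℝ => ∫ t, regularizationFactor ε (ψ t) • g t ∂μ)
      =O[nhdsWithin 0 (Set.Ioi 0)] (fun _ => (1 : ℝ)) := by
  refine IsBigO.of_bound (2 * ∫ t, ‖g t‖ ∂μ) ?_
  filter_upwards [Ioo_mem_nhdsGT (show (0 : ℝ) < 1 / 2 by norm_num)] with ε ⟨hε₀, hε₁⟩
  rw [norm_one, mul_one, ← integral_const_mul]
  refine norm_integral_le_of_norm_le (hg.norm.const_mul 2) (.of_forall fun t => ?_)
  rw [norm_smul]
  gcongr
  calc ‖regularizationFactor ε (ψ t)‖ ≤ (1 - ε)⁻¹ :=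
        regularizationFactor.norm_le_inv_one_sub hε₀.le (by linarith) (ψ t)
    _ ≤ 2 := inv_le_of_inv_le₀ two_pos (by linarith)

theorem stmt_8_general (hψ : AEMeasurable ψ μ) (hψ₀ : ∀ᵐ t ∂μ, ψ t ≠ 0)
    (hf₁ : Integrable (fun t => (ψ t)⁻¹ • f t) μ)
    (hf₃ : Integrable (fun t => (ψ t ^ 3)⁻¹ • f t) μ) :
    (fun ε : ℝ =>
        (1 / √ε) • (∫ t, (ψ t / (ε + (1 - ε) * ψ t ^ 2)) • f t ∂μ) -
          (1 / √ε) • ∫ t, (ψ t)⁻¹ • f t ∂μ) =O[nhdsWithin 0 (Set.Ioi 0)]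
      (fun ε : ℝ => √ε) := by
  have hbounded := isBigO_one_integral_regularizationFactor_smul
    (g := fun t => (ψ t)⁻¹ • f t - (ψ t ^ 3)⁻¹ • f t) ψ (hf₁.sub hf₃)
  refine ((isBigO_refl (fun ε : ℝ => √ε) _).smul hbounded).congr' ?_ (by simp)
  filter_upwards [Ioo_mem_nhdsGT one_pos] with ε ⟨hε₀, hε₁⟩
  rw [← smul_sub, integral_div_smul_sub_integral_inv_smul hε₀.le hε₁ hψ hψ₀ hf₁, smul_smul,
    one_div_mul_eq_div, div_sqrt]

end

theorem integrableOn_compact_inv_pow_smul {α 𝕜 E : Type*} [MeasurableSpace α]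
    [TopologicalSpace α] [OpensMeasurableSpace α] [T2Space α] {μ : Measure α}
    [IsFiniteMeasureOnCompacts μ] [NormedField 𝕜] [NormedAddCommGroup E] [NormedSpace 𝕜 E]
    {K : Set α} {ψ : α → 𝕜} {f : α → E} (hK : IsCompact K)
    (hf : ContinuousOn f K) (hψ : ContinuousOn ψ K) (hψ₀ : ∀ t ∈ K, ψ t ≠ 0) (n : ℕ) :
    IntegrableOn (fun t => (ψ t ^ n)⁻¹ • f t) K μ :=
  (((hψ.pow n).inv₀ fun t ht => pow_ne_zero n (hψ₀ t ht)).smul hf).integrableOn_compact hK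

theorem stmt_8 (c₁ c₂ : ℝ) (hc : c₁ < c₂) (f ψ : ℝ → ℝ)
    (hf : ContinuousOn f (Set.Icc c₁ c₂)) (hψ : ContinuousOn ψ (Set.Icc c₁ c₂))
    (δ : ℝ) (hδ : 0 < δ) (hψδ : ∀ t ∈ Set.Icc c₁ c₂, δ ≤ |ψ t|) :
    (fun ε : ℝ =>
        (1 / Real.sqrt ε) * (∫ t in c₁..c₂, f t * ψ t / (ε + (1 - ε) * ψ t ^ 2)) -
          (1 / Real.sqrt ε) * (∫ t in c₁..c₂, f t / ψ t)) =O[nhdsWithin 0 (Set.Ioi 0)]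
      (fun ε : ℝ => Real.sqrt ε) := by
  have hψ₀ : ∀ t ∈ Set.Icc c₁ c₂, ψ t ≠ 0 := fun t ht => abs_pos.mp (hδ.trans_le (hψδ t ht))
  have hint := integrableOn_compact_inv_pow_smul (μ := volume) isCompact_Icc hf hψ hψ₀
  have hint₁ : IntegrableOn (fun t => (ψ t)⁻¹ • f t) (Set.Icc c₁ c₂) := by
    simpa only [pow_one] using hint 1
  simpa only [intervalIntegral.integral_of_le hc.le, ← integral_Icc_eq_integral_Ioc, smul_eq_mul,
    div_mul_eq_mul_div, mul_comm (ψ _) (f _), ← div_eq_inv_mul] using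
    stmt_8_general (hψ.aemeasurable measurableSet_Icc)
      (ae_restrict_of_forall_mem measurableSet_Icc hψ₀) hint₁ (hint 3)
end

section
/- Let c₁ < c₂ be real numbers, let f : [c₁,c₂] → ℝ be continuous, and let ψ : [c₁,c₂] → ℝ be continuously differentiable with ψ(c₁) = 0 and ψ'(t) ≠ 0 for all t ∈ [c₁,c₂]. Then ∫_{c₁}^{c₂} √ε · f(t)/(ε + (1-ε)ψ(t)²) dt tends to (π/2) · f(c₁)/|ψ'(c₁)| as ε → 0⁺. -/
open Real MeasureTheory Filter

/-!
With `δ = √(ε / (1 - ε))` the integrand is, up to the factor `1 / √(1 - ε) → 1`, the Poisson kernel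
`δ / (δ ^ 2 + ψ t ^ 2)` times `f t`. For linear `ψ t = a * (t - c₁)` with `a > 0` this kernel has
integral `arctan (a * (c₂ - c₁) / δ) / a → π / (2 * a)` and concentrates at the endpoint `c₁`. In
general `ψ t = (t - c₁) * q t` with `q` continuous and nonvanishing. Replacing `q` by the constant
`q c₁` changes the kernel by at most `|(q c₁ / q t) ^ 2 - 1|` times the linear kernel, uniformly in
`δ`; this ratio vanishes at `c₁`, so the error disappears in the limit.
-/

open Set Topology

lemma tendsto_nhdsGT_of_continuousOn_Icc {X : Type*} [TopologicalSpace X] {a b : ℝ} {g : ℝ → X}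
    (hab : a < b) (hg : ContinuousOn g (Icc a b)) : Tendsto g (𝓝[>] a) (𝓝 (g a)) :=
  (((continuousWithinAt_Icc_iff_Ici hab).1 (hg a (left_mem_Icc.2 hab.le))).mono
    Ioi_subset_Ici_self).tendsto

lemma continuousOn_abs_div_sq_sub_one {X : Type*} [TopologicalSpace X] {q : X → ℝ} {s : Set X}
    {p : ℝ} (hq : ContinuousOn q s) (hq0 : ∀ x ∈ s, q x ≠ 0) :
    ContinuousOn (fun x => |(p / q x) ^ 2 - 1|) s :=
  (((continuousOn_const.div hq hq0).pow 2).sub continuousOn_const).abs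

lemma exists_continuousOn_sub_eq_smul {E : Type*} [NormedAddCommGroup E] [NormedSpace ℝ E]
    {g : ℝ → E} {g' : E} {a b : ℝ} (hg : ContinuousOn g (Ioc a b))
    (hg' : HasDerivWithinAt g g' (Ioi a) a) :
    ∃ q : ℝ → E, ContinuousOn q (Icc a b) ∧ q a = g' ∧ ∀ t, g t - g a = (t - a) • q t := by
  classical
  refine ⟨Function.update (slope g a) a g', continuousOn_update_iff.2 ⟨?_, fun _ => ?_⟩,
    Function.update_self .., fun t => ?_⟩
  · rw [Icc_sdiff_left]
    have hinv : ContinuousOn (fun t => (t - a)⁻¹) (Ioc a b) :=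
      ContinuousOn.inv₀ (by fun_prop) fun t ht => (sub_pos.2 ht.1).ne'
    exact hinv.smul (hg.sub continuousOn_const)
  · rw [Icc_sdiff_left]
    exact ((hasDerivWithinAt_iff_tendsto_slope' self_notMem_Ioi).1 hg').mono_left
      (nhdsWithin_mono _ Ioc_subset_Ioi_self)
  · rcases eq_or_ne t a with rfl | ht
    · rw [sub_self, sub_self, zero_smul]
    · rw [Function.update_of_ne ht, sub_smul_slope, vsub_eq_sub]

lemma injOn_of_hasDerivAt_ne_zero {g g' : ℝ → ℝ} {s : Set ℝ} (hs : s.OrdConnected)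
    (hg : ∀ t ∈ s, HasDerivAt g (g' t) t) (hg' : ∀ t ∈ s, g' t ≠ 0) : InjOn g s := by
  intro x hx y hy hxy
  wlog hlt : x < y generalizing x y
  · exact (not_lt.1 hlt).eq_or_lt.elim Eq.symm fun h => (this hy hx hxy.symm h).symm
  have hsub : Icc x y ⊆ s := hs.out hx hy
  obtain ⟨z, hz, hz0⟩ := exists_hasDerivAt_eq_zero hlt
    (HasDerivAt.continuousOn fun t ht => hg t (hsub ht)) hxy
    fun t ht => hg t (hsub (Ioo_subset_Icc_self ht))
  exact absurd hz0 (hg' z (hsub (Ioo_subset_Icc_self hz)))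

/-- The Poisson kernel of the upper half-plane at height `δ`, without its normalizing factor
`1 / π`. -/
noncomputable def halfPlaneKernel (δ x : ℝ) : ℝ := δ / (δ ^ 2 + x ^ 2)

namespace halfPlaneKernel

variable {δ : ℝ}

lemma nonneg (hδ : 0 ≤ δ) (x : ℝ) : 0 ≤ halfPlaneKernel δ x := by
  unfold halfPlaneKernel
  positivity

lemma continuous (hδ : δ ≠ 0) : Continuous (halfPlaneKernel δ) := by
  unfold halfPlaneKernel
  exact continuous_const.div (by fun_prop) fun x => by positivity

lemma le_div_sq {r x : ℝ} (hδ : 0 ≤ δ) (hr : 0 < r) (hx : r ≤ |x|) :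
    halfPlaneKernel δ x ≤ δ / r ^ 2 := by
  have hsq : r ^ 2 ≤ x ^ 2 := by simpa only [sq_abs] using pow_le_pow_left₀ hr.le hx 2
  unfold halfPlaneKernel
  gcongr
  exact hsq.trans (le_add_of_nonneg_left (sq_nonneg δ))

lemma tendstoUniformlyOn_zero {r : ℝ} (hr : 0 < r) :
    TendstoUniformlyOn halfPlaneKernel 0 (𝓝[>] 0) {x | r ≤ |x|} := by
  have hbound : Tendsto (fun δ : ℝ => δ / r ^ 2) (𝓝[>] 0) (𝓝 0) := by
    simpa only [zero_div, id] using
      (tendsto_id.div_const (r ^ 2)).mono_left (nhdsWithin_le_nhds (a := (0 : ℝ)))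
  rw [Metric.tendstoUniformlyOn_iff]
  intro η hη
  filter_upwards [self_mem_nhdsWithin, hbound.eventually_lt_const hη] with δ hδ hδη x hx
  rw [Pi.zero_apply, dist_zero_left, Real.norm_of_nonneg (nonneg hδ.le x)]
  exact (le_div_sq hδ.le hr hx).trans_lt hδη

lemma tendstoUniformlyOn_mul_sub {a c : ℝ} {u : Set ℝ} (ha : a ≠ 0) (hu : u ∈ 𝓝 c) :
    TendstoUniformlyOn (fun δ t => halfPlaneKernel δ (a * (t - c))) 0 (𝓝[>] 0) uᶜ := by
  obtain ⟨r, hr, hball⟩ := Metric.mem_nhds_iff.1 hu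
  have hfar : uᶜ ⊆ (fun t => a * (t - c)) ⁻¹' {x | |a| * r ≤ |x|} := by
    intro t ht
    have hrt : r ≤ |t - c| := not_lt.1 fun h => ht (hball h)
    simpa only [mem_preimage, mem_ofPred_eq, abs_mul] using
      mul_le_mul_of_nonneg_left hrt (abs_nonneg a)
  exact ((tendstoUniformlyOn_zero (mul_pos (abs_pos.2 ha) hr)).comp _).mono hfar

lemma abs_mul_sub_mul_le {p q : ℝ} (hδ : 0 < δ) (hq : q ≠ 0) (x : ℝ) :
    |halfPlaneKernel δ (q * x) - halfPlaneKernel δ (p * x)| ≤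
      halfPlaneKernel δ (p * x) * |(p / q) ^ 2 - 1| := by
  have hfactor : halfPlaneKernel δ (q * x) - halfPlaneKernel δ (p * x) =
      halfPlaneKernel δ (p * x) * ((p / q) ^ 2 - 1) * ((q * x) ^ 2 / (δ ^ 2 + (q * x) ^ 2)) := by
    unfold halfPlaneKernel
    field_simp
    ring
  have hle : (q * x) ^ 2 / (δ ^ 2 + (q * x) ^ 2) ≤ 1 :=
    div_le_one_of_le₀ (le_add_of_nonneg_left (sq_nonneg δ)) (by positivity)
  rw [hfactor, abs_mul, abs_mul, abs_of_nonneg (nonneg hδ.le _),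
    abs_of_nonneg (by positivity : 0 ≤ (q * x) ^ 2 / (δ ^ 2 + (q * x) ^ 2))]
  exact mul_le_of_le_one_right (mul_nonneg (nonneg hδ.le _) (abs_nonneg _)) hle

variable {a c₁ c₂ : ℝ}

lemma integral_mul_sub (hδ : δ ≠ 0) (ha : a ≠ 0) (c₁ c₂ : ℝ) :
    ∫ t in c₁..c₂, halfPlaneKernel δ (a * (t - c₁)) = arctan (a * (c₂ - c₁) / δ) / a := by
  have hkernel (x : ℝ) : halfPlaneKernel δ (a * x) = δ⁻¹ * (1 + (a / δ * x) ^ 2)⁻¹ := by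
    unfold halfPlaneKernel
    field_simp
  simp only [hkernel]
  rw [intervalIntegral.integral_comp_sub_right (fun x => δ⁻¹ * (1 + (a / δ * x) ^ 2)⁻¹),
    intervalIntegral.integral_const_mul,
    intervalIntegral.integral_comp_mul_left (fun x => (1 + x ^ 2)⁻¹) (div_ne_zero ha hδ),
    integral_inv_one_add_sq, sub_self, mul_zero, arctan_zero, sub_zero, smul_eq_mul,
    div_mul_eq_mul_div]
  field_simp

lemma tendsto_integral_mul_sub (hc : c₁ < c₂) (ha : 0 < a) :
    Tendsto (fun δ => ∫ t in c₁..c₂, halfPlaneKernel δ (a * (t - c₁))) (𝓝[>] 0)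
      (𝓝 (π / 2 / a)) := by
  have hatTop : Tendsto (fun δ : ℝ => a * (c₂ - c₁) / δ) (𝓝[>] 0) atTop :=
    tendsto_inv_nhdsGT_zero.const_mul_atTop (mul_pos ha (sub_pos.2 hc))
  refine (((tendsto_arctan_atTop.mono_right nhdsWithin_le_nhds).comp hatTop).div_const a).congr' ?_
  filter_upwards [self_mem_nhdsWithin] with δ hδ
  exact (integral_mul_sub hδ.ne' ha.ne' c₁ c₂).symm

variable {E : Type*} [NormedAddCommGroup E] [NormedSpace ℝ E] {f : ℝ → E} {y : E}
  {q : ℝ → ℝ}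

lemma intervalIntegrable_smul {g : ℝ → ℝ} (hδ : δ ≠ 0) (hg : ContinuousOn g (uIcc c₁ c₂))
    (hf : IntervalIntegrable f volume c₁ c₂) :
    IntervalIntegrable (fun t => halfPlaneKernel δ (g t) • f t) volume c₁ c₂ :=
  hf.continuousOn_smul ((continuous hδ).comp_continuousOn hg)

lemma norm_integral_smul_sub_integral_smul_le {p : ℝ} (hδ : 0 < δ) (hc : c₁ ≤ c₂)
    (hq : ContinuousOn q (Icc c₁ c₂)) (hq0 : ∀ t ∈ Icc c₁ c₂, q t ≠ 0)
    (hf : IntervalIntegrable f volume c₁ c₂) :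
    ‖(∫ t in c₁..c₂, halfPlaneKernel δ (q t * (t - c₁)) • f t) -
        ∫ t in c₁..c₂, halfPlaneKernel δ (p * (t - c₁)) • f t‖ ≤
      ∫ t in c₁..c₂, halfPlaneKernel δ (p * (t - c₁)) • |(p / q t) ^ 2 - 1| • ‖f t‖ := by
  have hratio := continuousOn_abs_div_sq_sub_one (p := p) hq hq0
  rw [← uIcc_of_le hc] at hq hratio
  have hp_cont : ContinuousOn (fun t => p * (t - c₁)) (uIcc c₁ c₂) := by fun_prop
  have hq_cont : ContinuousOn (fun t => q t * (t - c₁)) (uIcc c₁ c₂) := by fun_prop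
  rw [← intervalIntegral.integral_sub (intervalIntegrable_smul hδ.ne' hq_cont hf)
    (intervalIntegrable_smul hδ.ne' hp_cont hf)]
  refine intervalIntegral.norm_integral_le_of_norm_le hc (ae_of_all _ fun t ht => ?_)
    (intervalIntegrable_smul hδ.ne' hp_cont (hf.norm.continuousOn_smul hratio))
  rw [← sub_smul, norm_smul, smul_smul, smul_eq_mul]
  gcongr
  exact abs_mul_sub_mul_le hδ (hq0 t (Ioc_subset_Icc_self ht)) (t - c₁)

variable [CompleteSpace E]

lemma tendsto_integral_mul_sub_smul (hc : c₁ < c₂) (ha : 0 < a)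
    (hf : IntervalIntegrable f volume c₁ c₂) (hfy : Tendsto f (𝓝[>] c₁) (𝓝 y)) :
    Tendsto (fun δ => ∫ t in c₁..c₂, halfPlaneKernel δ (a * (t - c₁)) • f t) (𝓝[>] 0)
      (𝓝 ((π / 2 / a) • y)) := by
  have hmass : 0 < π / 2 / a := by positivity
  have hpeak := tendsto_setIntegral_peak_smul_of_integrableOn_of_tendsto
    (φ := fun δ t => (π / 2 / a)⁻¹ * halfPlaneKernel δ (a * (t - c₁))) (g := f) (μ := volume)
    (x₀ := c₁) (l := 𝓝[>] 0) (a := y) measurableSet_Ioc measurableSet_Ioc (subset_refl (Ioc c₁ c₂))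
    self_mem_nhdsWithin measure_Ioc_lt_top.ne ?nonneg ?uniform ?mass ?measurable
    ((intervalIntegrable_iff_integrableOn_Ioc_of_le hc.le).1 hf)
    (hfy.mono_left (nhdsWithin_mono _ Ioc_subset_Ioi_self))
  case nonneg =>
    filter_upwards [self_mem_nhdsWithin] with δ hδ t _
    exact mul_nonneg (inv_nonneg.2 hmass.le) (nonneg hδ.le _)
  case uniform =>
    intro u hu hcu
    simpa only [Function.comp_def, Pi.zero_apply, mul_zero] using!
      (Real.uniformContinuous_const_mul (x := (π / 2 / a)⁻¹)).comp_tendstoUniformlyOn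
        ((tendstoUniformlyOn_mul_sub ha.ne' (hu.mem_nhds hcu)).mono (sdiff_subset_compl _ _))
  case mass =>
    simp only [← intervalIntegral.integral_of_le hc.le, intervalIntegral.integral_const_mul]
    simpa only [inv_mul_cancel₀ hmass.ne'] using
      (tendsto_integral_mul_sub hc ha).const_mul (π / 2 / a)⁻¹
  case measurable =>
    filter_upwards [self_mem_nhdsWithin] with δ hδ
    have hcont := continuous hδ.ne'
    exact Continuous.aestronglyMeasurable (by fun_prop)
  refine (hpeak.const_smul (π / 2 / a)).congr fun δ => ?_
  rw [← integral_smul, intervalIntegral.integral_of_le hc.le]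
  simp only [smul_smul, mul_inv_cancel_left₀ hmass.ne']

lemma tendsto_integral_fun_mul_sub_smul (hc : c₁ < c₂) (hq : ContinuousOn q (Icc c₁ c₂))
    (hq0 : ∀ t ∈ Icc c₁ c₂, q t ≠ 0)
    (hf : IntervalIntegrable f volume c₁ c₂) (hfy : Tendsto f (𝓝[>] c₁) (𝓝 y)) :
    Tendsto (fun δ => ∫ t in c₁..c₂, halfPlaneKernel δ (q t * (t - c₁)) • f t) (𝓝[>] 0)
      (𝓝 ((π / 2 / |q c₁|) • y)) := by
  have hqc₁ : q c₁ ≠ 0 := hq0 c₁ (left_mem_Icc.2 hc.le)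
  let w : ℝ → ℝ := fun t => |(|q c₁| / q t) ^ 2 - 1|
  have hw : ContinuousOn w (Icc c₁ c₂) := continuousOn_abs_div_sq_sub_one hq hq0
  have hw0 : Tendsto w (𝓝[>] c₁) (𝓝 0) := by
    have hwc₁ : w c₁ = 0 := by simp [w, div_pow, hqc₁]
    exact hwc₁ ▸ tendsto_nhdsGT_of_continuousOn_Icc hc hw
  have hwf : IntervalIntegrable (fun t => w t • ‖f t‖) volume c₁ c₂ :=
    hf.norm.continuousOn_smul (by rwa [uIcc_of_le hc.le])
  have hlinear := tendsto_integral_mul_sub_smul hc (abs_pos.2 hqc₁) hf hfy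
  have herror := tendsto_integral_mul_sub_smul hc (abs_pos.2 hqc₁) hwf (hw0.smul hfy.norm)
  rw [zero_smul, smul_zero] at herror
  refine hlinear.congr_dist (squeeze_zero' (.of_forall fun _ => dist_nonneg) ?_ herror)
  filter_upwards [self_mem_nhdsWithin] with δ hδ
  rw [dist_eq_norm']
  exact norm_integral_smul_sub_integral_smul_le hδ hc.le hq hq0 hf

end halfPlaneKernel

lemma tendsto_sqrt_div_one_sub : Tendsto (fun ε : ℝ => √(ε / (1 - ε))) (𝓝[>] 0) (𝓝[>] 0) := by
  refine tendsto_nhdsWithin_iff.2 ⟨?_, ?_⟩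
  · have hcont : ContinuousAt (fun ε : ℝ => √(ε / (1 - ε))) 0 :=
      (continuousAt_id.div (by fun_prop) (by norm_num)).sqrt
    simpa using hcont.tendsto.mono_left nhdsWithin_le_nhds
  · filter_upwards [Ioo_mem_nhdsGT one_pos] with ε hε
    exact sqrt_pos.2 (div_pos hε.1 (sub_pos.2 hε.2))

lemma sqrt_div_add_eq_halfPlaneKernel {ε : ℝ} (hε : ε ∈ Ioo 0 1) (x : ℝ) :
    √ε / (ε + (1 - ε) * x ^ 2) = (√(1 - ε))⁻¹ * halfPlaneKernel √(ε / (1 - ε)) x := by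
  have hε' : 0 < 1 - ε := sub_pos.2 hε.2
  have hsq : √(1 - ε) ^ 2 = 1 - ε := sq_sqrt hε'.le
  unfold halfPlaneKernel
  rw [sq_sqrt (div_pos hε.1 hε').le, sqrt_div hε.1.le]
  have hε0 := hε.1
  field_simp
  rw [hsq]

theorem stmt_9_general {E : Type*} [NormedAddCommGroup E] [NormedSpace ℝ E] [CompleteSpace E]
    {f : ℝ → E} {y : E} {ψ : ℝ → ℝ} {a c₁ c₂ : ℝ} (hc : c₁ < c₂)
    (hf : IntervalIntegrable f volume c₁ c₂) (hfy : Tendsto f (𝓝[>] c₁) (𝓝 y))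
    (hψ : ContinuousOn ψ (Ioc c₁ c₂)) (hψa : HasDerivWithinAt ψ a (Ioi c₁) c₁)
    (ha : a ≠ 0) (hψc₁ : ψ c₁ = 0) (hψ0 : ∀ t ∈ Ioc c₁ c₂, ψ t ≠ 0) :
    Tendsto (fun ε : ℝ => ∫ t in c₁..c₂, (√ε / (ε + (1 - ε) * ψ t ^ 2)) • f t) (𝓝[>] 0)
      (𝓝 ((π / 2 / |a|) • y)) := by
  obtain ⟨q, hq, rfl, hψq⟩ := exists_continuousOn_sub_eq_smul hψ hψa
  replace hψq (t : ℝ) : ψ t = q t * (t - c₁) := by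
    rw [mul_comm, ← smul_eq_mul, ← hψq, hψc₁, sub_zero]
  have hq0 : ∀ t ∈ Icc c₁ c₂, q t ≠ 0 := fun t ht => by
    rcases ht.1.eq_or_lt with rfl | htc
    · exact ha
    · exact left_ne_zero_of_mul (hψq t ▸ hψ0 t ⟨htc, ht.2⟩)
  have hkernel := (halfPlaneKernel.tendsto_integral_fun_mul_sub_smul hc hq hq0 hf hfy).comp
    tendsto_sqrt_div_one_sub
  have hfactor : Tendsto (fun ε : ℝ => (√(1 - ε))⁻¹) (𝓝[>] 0) (𝓝 1) := by
    have hcont : ContinuousAt (fun ε : ℝ => (√(1 - ε))⁻¹) 0 :=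
      ContinuousAt.inv₀ (by fun_prop) (by norm_num)
    simpa using hcont.tendsto.mono_left nhdsWithin_le_nhds
  rw [← one_smul ℝ ((π / 2 / |q c₁|) • y)]
  refine (hfactor.smul hkernel).congr' ?_
  filter_upwards [Ioo_mem_nhdsGT one_pos] with ε hε
  simp only [sqrt_div_add_eq_halfPlaneKernel hε, hψq, mul_smul,
    intervalIntegral.integral_smul, Function.comp_apply]

theorem stmt_9 (c₁ c₂ : ℝ) (hc : c₁ < c₂) (f ψ ψ' : ℝ → ℝ)
    (hf : ContinuousOn f (Set.Icc c₁ c₂))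
    (hψ : ∀ t ∈ Set.Icc c₁ c₂, HasDerivAt ψ (ψ' t) t)
    (hψ' : ContinuousOn ψ' (Set.Icc c₁ c₂))
    (hψc₁ : ψ c₁ = 0) (hψ'0 : ∀ t ∈ Set.Icc c₁ c₂, ψ' t ≠ 0) :
    Tendsto (fun ε : ℝ => ∫ t in c₁..c₂, Real.sqrt ε * f t / (ε + (1 - ε) * ψ t ^ 2))
      (nhdsWithin 0 (Set.Ioi 0)) (nhds (π / 2 * f c₁ / |ψ' c₁|)) := by
  have hmem : c₁ ∈ Icc c₁ c₂ := left_mem_Icc.2 hc.le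
  have hψ0 : ∀ t ∈ Ioc c₁ c₂, ψ t ≠ 0 := fun t ht => hψc₁ ▸
    (injOn_of_hasDerivAt_ne_zero ordConnected_Icc hψ hψ'0).ne (Ioc_subset_Icc_self ht) hmem ht.1.ne'
  simpa only [smul_eq_mul, div_mul_eq_mul_div] using
    stmt_9_general hc (hf.intervalIntegrable_of_Icc hc.le)
      (tendsto_nhdsGT_of_continuousOn_Icc hc hf)
      (HasDerivAt.continuousOn fun t ht => hψ t (Ioc_subset_Icc_self ht))
      (hψ c₁ hmem).hasDerivWithinAt (hψ'0 c₁ hmem) hψc₁ hψ0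
end

section
/- Let c₁ < c₂ be real numbers and let ψ : [c₁,c₂] → ℝ be continuously differentiable with ψ(c₁) = 0 and ψ'(t) ≠ 0 for all t ∈ [c₁,c₂]. Then the function t ↦ log|ψ(t)| is (Lebesgue) integrable on the interval [c₁,c₂]. -/
open Real MeasureTheory Filter

/-!
On a compact set, integrability is a local matter. Near a point where `f` does not vanish, `log ‖f‖`
is bounded. Near a zero `x` of `f` with nonzero derivative, `log ‖f t‖ - log ‖t - x‖` is the
logarithm of the norm of a difference quotient and so converges as `t → x`; hence `log ‖f‖` differs
from the locally integrable function `t ↦ log ‖t - x‖` by a bounded one.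
-/

open scoped Topology

section LogNorm

variable {E : Type*} [NormedAddCommGroup E]

lemma stronglyMeasurableAtFilter_log_norm {α : Type*} [MeasurableSpace α] {μ : Measure α}
    {l : Filter α} {f : α → E} (hf : StronglyMeasurableAtFilter f l μ) :
    StronglyMeasurableAtFilter (fun t => log ‖f t‖) l μ :=
  let ⟨s, hs, hfs⟩ := hf
  ⟨s, hs, (measurable_log.comp_aemeasurable hfs.norm.aemeasurable).aestronglyMeasurable⟩

lemma locallyIntegrable_log_norm_sub (a : ℝ) : LocallyIntegrable (fun t : ℝ => log ‖t - a‖) := by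
  intro x
  have hint : IntervalIntegrable (fun t : ℝ => log ‖t - a‖) volume (x - 1) (x + 1) := by
    simp only [norm_eq_abs, log_abs]
    simpa only [sub_add_cancel] using (intervalIntegral.intervalIntegrable_log'
      (a := x - 1 - a) (b := x + 1 - a)).comp_sub_right a
  exact ⟨Set.Icc (x - 1) (x + 1), Icc_mem_nhds (by linarith) (by linarith),
    (intervalIntegrable_iff_integrableOn_Icc_of_le (by linarith)).1 hint⟩

lemma tendsto_log_norm_sub_log_norm_sub {𝕜 : Type*} [NontriviallyNormedField 𝕜] [NormedSpace 𝕜 E]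
    {f : 𝕜 → E} {f' : E} {s : Set 𝕜} {x : 𝕜} (hf : HasDerivWithinAt f f' s x) (hfx : f x = 0)
    (hf' : f' ≠ 0) :
    Tendsto (fun t => log ‖f t‖ - log ‖t - x‖) (𝓝[s \ {x}] x) (𝓝 (log ‖f'‖)) := by
  have hslope : Tendsto (slope f x) (𝓝[s \ {x}] x) (𝓝 f') :=
    hasDerivWithinAt_iff_tendsto_slope.1 hf
  refine (hslope.norm.log (norm_ne_zero_iff.2 hf')).congr' ?_
  filter_upwards [hslope.eventually_ne hf', self_mem_nhdsWithin] with t hslope_ne ht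
  have hfactor : f t = (t - x) • slope f x t := by rw [sub_smul_slope, vsub_eq_sub, hfx, sub_zero]
  rw [hfactor, norm_smul, log_mul (norm_ne_zero_iff.2 (sub_ne_zero.2 ht.2))
    (norm_ne_zero_iff.2 hslope_ne), add_sub_cancel_left]

variable [NormedSpace ℝ E] {f : ℝ → E} {s : Set ℝ}

lemma integrableAtFilter_log_norm_of_hasDerivWithinAt {f' : E} {x : ℝ}
    [(𝓝[s] x).IsMeasurablyGenerated] (hfm : StronglyMeasurableAtFilter f (𝓝[s] x))
    (hf : HasDerivWithinAt f f' s x) (hfx : f x = 0) (hf' : f' ≠ 0) :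
    IntegrableAtFilter (fun t => log ‖f t‖) (𝓝[s] x) := by
  have hlog : IntegrableAtFilter (fun t : ℝ => log ‖t - x‖) (𝓝[s] x) :=
    (locallyIntegrable_log_norm_sub x x).filter_mono nhdsWithin_le_nhds
  have hae : 𝓝[s] x ⊓ ae volume ≤ 𝓝[s \ {x}] x := by
    rw [Set.sdiff_eq, nhdsWithin_inter']
    exact inf_le_inf_left _ (le_principal_iff.2 (compl_mem_ae_iff.2 (measure_singleton x)))
  have hmeas : StronglyMeasurableAtFilter (fun t => log ‖f t‖ - log ‖t - x‖) (𝓝[s] x) :=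
    let ⟨u, hu, hfu⟩ := stronglyMeasurableAtFilter_log_norm hfm
    ⟨u, hu, hfu.sub (locallyIntegrable_log_norm_sub x).aestronglyMeasurable.restrict⟩
  have hdiff : IntegrableAtFilter (fun t => log ‖f t‖ - log ‖t - x‖) (𝓝[s] x) :=
    ((tendsto_log_norm_sub_log_norm_sub hf hfx hf').mono_left hae).integrableAtFilter_ae hmeas
      (volume.finiteAt_nhdsWithin x s)
  exact (hdiff.add hlog).congr (.of_forall fun t => sub_add_cancel _ _)

theorem stmt_13_general {f' : ℝ → E} (hs : IsCompact s) (hfc : ContinuousOn f s)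
    (hf : ∀ x ∈ s, f x = 0 → HasDerivWithinAt f (f' x) s x)
    (hf' : ∀ x ∈ s, f x = 0 → f' x ≠ 0) :
    IntegrableOn (fun t => log ‖f t‖) s := by
  refine LocallyIntegrableOn.integrableOn_isCompact (fun x hx => ?_) hs
  have := hs.measurableSet.nhdsWithin_isMeasurablyGenerated x
  have hfm : StronglyMeasurableAtFilter f (𝓝[s] x) :=
    ⟨s, self_mem_nhdsWithin, hfc.aestronglyMeasurable hs.measurableSet⟩
  by_cases hfx : f x = 0
  · exact integrableAtFilter_log_norm_of_hasDerivWithinAt hfm (hf x hx hfx) hfx (hf' x hx hfx)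
  · exact ((hfc x hx).norm.log (norm_ne_zero_iff.2 hfx)).integrableAtFilter
      (stronglyMeasurableAtFilter_log_norm hfm) (volume.finiteAt_nhdsWithin x s)

end LogNorm

theorem stmt_13 (c₁ c₂ : ℝ) (hc : c₁ < c₂) (ψ ψ' : ℝ → ℝ)
    (hψ : ∀ t ∈ Set.Icc c₁ c₂, HasDerivAt ψ (ψ' t) t)
    (hψ' : ContinuousOn ψ' (Set.Icc c₁ c₂))
    (hψc₁ : ψ c₁ = 0) (hψ'0 : ∀ t ∈ Set.Icc c₁ c₂, ψ' t ≠ 0) :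
    IntegrableOn (fun t => Real.log |ψ t|) (Set.Icc c₁ c₂) :=
  stmt_13_general isCompact_Icc (HasDerivAt.continuousOn hψ)
    (fun t ht _ => (hψ t ht).hasDerivWithinAt) (fun t ht _ => hψ'0 t ht)
end

section
/- Let C > 0 and ρ > 0. Then ∫_0^ρ √ε/(ε + C²t⁴) dt tends to +∞ as ε → 0⁺ (i.e., for every M > 0 there is ε₀ > 0 such that the integral exceeds M for all 0 < ε < ε₀). -/
open Real MeasureTheory Filter

/-! The integrand decreases in `t`, so the integral is at least `t₀` times its value at any
`t₀ ∈ [0, ρ]`. At the scale `t₀ = ε ^ p⁻¹`, where the two terms of the denominator `ε + K * t ^ p`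
are comparable, this bound is a constant times `ε ^ (s + p⁻¹ - 1)`; for `s = 1 / 2` and `p = 4`
the exponent is `-1 / 4`. -/

lemma sub_mul_le_integral_of_antitoneOn {f : ℝ → ℝ} {a b c : ℝ}
    (hf : AntitoneOn f (Set.Icc a b)) (hfb : 0 ≤ f b) (hc : c ∈ Set.Icc a b) :
    (c - a) * f c ≤ ∫ t in a..b, f t := by
  obtain ⟨hac, hcb⟩ := hc
  have hab : a ≤ b := hac.trans hcb
  have hint : IntervalIntegrable f volume a b :=
    AntitoneOn.intervalIntegrable (by rwa [Set.uIcc_of_le hab])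
  have hint_left : IntervalIntegrable f volume a c :=
    hint.mono_set (by simpa [Set.uIcc_of_le, *] using Set.Icc_subset_Icc_right hcb)
  have hnonneg : ∀ t ∈ Set.Ioc a b, 0 ≤ f t := fun t ht ↦
    hfb.trans (hf (Set.Ioc_subset_Icc_self ht) (Set.right_mem_Icc.2 hab) ht.2)
  calc (c - a) * f c = ∫ _ in a..c, f c := by simp
    _ ≤ ∫ t in a..c, f t :=
      intervalIntegral.integral_mono_on hac intervalIntegrable_const hint_left fun t ht ↦
        hf (Set.Icc_subset_Icc_right hcb ht) ⟨hac, hcb⟩ ht.2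
    _ ≤ ∫ t in a..b, f t :=
      intervalIntegral.integral_mono_interval le_rfl hac hcb
        (ae_restrict_of_forall_mem measurableSet_Ioc hnonneg) hint

section PowerKernel

variable {K p ε : ℝ}

lemma antitoneOn_div_add_mul_rpow {A : ℝ} (hA : 0 ≤ A) (hK : 0 ≤ K) (hp : 0 ≤ p) (hε : 0 < ε) :
    AntitoneOn (fun t : ℝ ↦ A / (ε + K * t ^ p)) (Set.Ici 0) := by
  intro t (ht : 0 ≤ t) u _ htu
  dsimp only
  gcongr

lemma inv_mul_rpow_le_integral_rpow_div {ρ : ℝ} (s : ℝ) (hK : 0 ≤ K) (hp : 0 < p) (hε : 0 < ε)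
    (hερ : ε ^ p⁻¹ ≤ ρ) :
    (1 + K)⁻¹ * ε ^ (s + p⁻¹ - 1) ≤ ∫ t in (0 : ℝ)..ρ, ε ^ s / (ε + K * t ^ p) := by
  have hscale : 0 ≤ ε ^ p⁻¹ := by positivity
  have hρ : 0 ≤ ρ := hscale.trans hερ
  have hanti : AntitoneOn (fun t : ℝ ↦ ε ^ s / (ε + K * t ^ p)) (Set.Icc 0 ρ) :=
    (antitoneOn_div_add_mul_rpow (by positivity) hK hp.le hε).mono Set.Icc_subset_Ici_self
  calc (1 + K)⁻¹ * ε ^ (s + p⁻¹ - 1)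
      = (ε ^ p⁻¹ - 0) * (ε ^ s / (ε + K * (ε ^ p⁻¹) ^ p)) := by
        rw [rpow_inv_rpow hε.le hp.ne', rpow_sub_one hε.ne', rpow_add hε]
        field_simp
        ring
    _ ≤ ∫ t in (0 : ℝ)..ρ, ε ^ s / (ε + K * t ^ p) :=
        sub_mul_le_integral_of_antitoneOn hanti (by positivity) ⟨hscale, hερ⟩

end PowerKernel

lemma eventually_rpow_le_nhdsGT_zero {r ρ : ℝ} (hr : 0 < r) (hρ : 0 < ρ) :
    ∀ᶠ ε : ℝ in nhdsWithin 0 (Set.Ioi 0), ε ^ r ≤ ρ := by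
  have hlim : Tendsto (fun ε : ℝ ↦ ε ^ r) (nhds 0) (nhds 0) := by
    simpa [hr.ne'] using (continuousAt_rpow_const 0 r (.inr hr.le)).tendsto
  exact (hlim.mono_left nhdsWithin_le_nhds).eventually_le_const hρ

theorem stmt_18_general {K ρ s p : ℝ} (hK : 0 ≤ K) (hρ : 0 < ρ) (hp : 0 < p)
    (hsp : s + p⁻¹ < 1) :
    Tendsto (fun ε : ℝ ↦ ∫ t in (0 : ℝ)..ρ, ε ^ s / (ε + K * t ^ p))
      (nhdsWithin 0 (Set.Ioi 0)) atTop := by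
  have hlower : Tendsto (fun ε : ℝ ↦ (1 + K)⁻¹ * ε ^ (s + p⁻¹ - 1))
      (nhdsWithin 0 (Set.Ioi 0)) atTop :=
    (tendsto_rpow_neg_nhdsGT_zero (by linarith)).const_mul_atTop (by positivity)
  refine tendsto_atTop_mono' _ ?_ hlower
  filter_upwards [self_mem_nhdsWithin, eventually_rpow_le_nhdsGT_zero (inv_pos.2 hp) hρ]
    with ε hε hερ
  exact inv_mul_rpow_le_integral_rpow_div s hK hp hε hερ

theorem stmt_18 (C ρ : ℝ) (hC : 0 < C) (hρ : 0 < ρ) :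
    Tendsto (fun ε : ℝ => ∫ t in (0 : ℝ)..ρ, Real.sqrt ε / (ε + C ^ 2 * t ^ 4))
      (nhdsWithin 0 (Set.Ioi 0)) atTop := by
  simpa [sqrt_eq_rpow] using
    stmt_18_general (s := 1 / 2) (p := 4) (sq_nonneg C) hρ (by norm_num) (by norm_num)
end
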